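/- For the matrix P_A given by the recursive construction: for every x ∈ ℝⁿ with ⟨x, 𝟙⟩_θ = 0 one has ⟨P_A x, x⟩_θ ≤ −(θ₁/(1−θ₁)) ⟨x, x⟩_θ. Hence the second largest eigenvalue of P_A (the supremum of the Rayleigh quotient ⟨P_A x, x⟩_θ / ⟨x, x⟩_θ over nonzero x with ⟨x, 𝟙⟩_θ = 0) equals −θ₁/(1−θ₁), and this value is minimal among the second largest eigenvalues of all row-stochastic matrices reversible with respect to θ. -/

import Mathlib

/-!
Complete every `P^{(k)}` in its last diagonal entry so that its rows sum to `1`. Writing `M`, `N`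
and `F` for `⟨x, 𝟙⟩_θ`, `⟨x, x⟩_θ` and `⟨P^{(k)} x, x⟩_θ`, the bound
`(s_k - t) F ≤ M² - t N` holds for all `t ≤ θ_k`, by induction downwards from `k = n`. Splitting off
the state `k` turns the bound for `k + 1` at `t = θ_k` (available since `θ_k ≤ θ_{k+1}`) into the
bound for `k` at `t = θ_k`, and Cauchy–Schwarz `M² ≤ s_k N` allows `t` to decrease. On mean-zero
vectors the case `k = 1`, `t = θ_1` is the asserted inequality.

Conversely, any `Q` with unit row sums and stationary weight `θ` has at the centred indicator of the
state `a` the Rayleigh quotient `(Q a a - θ_a) / (1 - θ_a)`. For `a = 1` this is at least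
`-θ_1 / (1 - θ_1)` when `0 ≤ Q 1 1`, with equality for `P_A`, whose first diagonal entry is `0`.
-/

section Forms

open Finset

variable {ι : Type*}

/-- The pairing `⟨x, 𝟙⟩_θ` over the states in `I`. -/
def weightedSum (I : Finset ι) (θ x : ι → ℝ) : ℝ :=
  ∑ i ∈ I, x i * θ i

/-- The squared norm `⟨x, x⟩_θ` over the states in `I`. -/
def weightedNormSq (I : Finset ι) (θ x : ι → ℝ) : ℝ :=
  ∑ i ∈ I, x i * x i * θ i

/-- The quadratic form `⟨A x, x⟩_θ` of the block of `A` with rows and columns in `I`. -/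
def weightedForm (I : Finset ι) (θ : ι → ℝ) (A : ι → ι → ℝ) (x : ι → ℝ) : ℝ :=
  ∑ i ∈ I, (∑ j ∈ I, A i j * x j) * x i * θ i

/-- The Rayleigh quotients of `A` at the vectors that are nonzero on `I` and orthogonal to `𝟙`;
their supremum is the second largest eigenvalue when `A` is stochastic and reversible. -/
def rayleighQuotients (I : Finset ι) (θ : ι → ℝ) (A : ι → ι → ℝ) : Set ℝ :=
  {r | ∃ x : ι → ℝ, (∃ i ∈ I, x i ≠ 0) ∧ weightedSum I θ x = 0 ∧
    r = weightedForm I θ A x / weightedNormSq I θ x}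

variable {I : Finset ι} {θ x : ι → ℝ} {A B : ι → ι → ℝ}

theorem weightedForm_congr (h : ∀ i ∈ I, ∀ j ∈ I, A i j = B i j) :
    weightedForm I θ A x = weightedForm I θ B x := by
  refine sum_congr rfl fun i hi ↦ ?_
  rw [sum_congr rfl fun j hj ↦ by rw [h i hi j hj]]

theorem mul_self_mul_le_weightedNormSq (hθ : ∀ i ∈ I, 0 ≤ θ i) {i : ι} (hi : i ∈ I) :
    x i * x i * θ i ≤ weightedNormSq I θ x :=
  single_le_sum (f := fun i ↦ x i * x i * θ i)
    (fun j hj ↦ mul_nonneg (mul_self_nonneg _) (hθ j hj)) hi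

theorem weightedNormSq_pos (hθ : ∀ i ∈ I, 0 < θ i) (hx : ∃ i ∈ I, x i ≠ 0) :
    0 < weightedNormSq I θ x := by
  obtain ⟨i, hi, hxi⟩ := hx
  exact (mul_pos (mul_self_pos.2 hxi) (hθ i hi)).trans_le
    (mul_self_mul_le_weightedNormSq (fun j hj ↦ (hθ j hj).le) hi)

theorem sq_weightedSum_le (hθ : ∀ i ∈ I, 0 ≤ θ i) :
    weightedSum I θ x ^ 2 ≤ (∑ i ∈ I, θ i) * weightedNormSq I θ x :=
  sum_sq_le_sum_mul_sum_of_sq_le_mul I hθ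
    (fun i hi ↦ mul_nonneg (mul_self_nonneg _) (hθ i hi)) fun i _ ↦ le_of_eq (by ring)

theorem bddAbove_rayleighQuotients (hθ : ∀ i ∈ I, 0 < θ i) (A : ι → ι → ℝ) :
    BddAbove (rayleighQuotients I θ A) := by
  refine ⟨∑ i ∈ I, ∑ j ∈ I, |A i j| * θ i * (((θ i)⁻¹ + (θ j)⁻¹) / 2), ?_⟩
  rintro r ⟨x, hx, -, rfl⟩
  rw [div_le_iff₀ (weightedNormSq_pos hθ hx), weightedForm, sum_mul]
  refine sum_le_sum fun i hi ↦ ?_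
  rw [sum_mul, sum_mul, sum_mul]
  refine sum_le_sum fun j hj ↦ ?_
  have coord_sq_le : ∀ k ∈ I, x k ^ 2 ≤ (θ k)⁻¹ * weightedNormSq I θ x := fun k hk ↦ by
    rw [inv_mul_eq_div, le_div_iff₀ (hθ k hk), sq]
    exact mul_self_mul_le_weightedNormSq (fun l hl ↦ (hθ l hl).le) hk
  have abs_mul_le : |x j * x i| ≤ (x i ^ 2 + x j ^ 2) / 2 := by
    rw [abs_mul, ← sq_abs (x i), ← sq_abs (x j)]
    linarith [two_mul_le_add_sq |x j| |x i|]
  calc A i j * x j * x i * θ i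
      = A i j * (x j * x i) * θ i := by ring
    _ ≤ |A i j| * |x j * x i| * θ i := by
        rw [← abs_mul]
        exact mul_le_mul_of_nonneg_right (le_abs_self _) (hθ i hi).le
    _ ≤ |A i j| * (((θ i)⁻¹ * weightedNormSq I θ x + (θ j)⁻¹ * weightedNormSq I θ x) / 2)
          * θ i := by
        have := (hθ i hi).le
        gcongr
        linarith [coord_sq_le i hi, coord_sq_le j hj]
    _ = |A i j| * θ i * (((θ i)⁻¹ + (θ j)⁻¹) / 2) * weightedNormSq I θ x := by ring

end Forms

section FormBound

open Finset

variable {ι : Type*} {I : Finset ι} {θ x : ι → ℝ} {A B : ι → ι → ℝ} {t t' : ℝ}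

/-- The bound `(s - t) ⟨A x, x⟩_θ ≤ ⟨x, 𝟙⟩_θ² - t ⟨x, x⟩_θ`, where `s` is the total weight of `I`.
It is imposed on all `x`, not only on those orthogonal to `𝟙`, so that it can be propagated from a
set of states to a larger one. -/
def HasFormBound (I : Finset ι) (θ : ι → ℝ) (A : ι → ι → ℝ) (t : ℝ) : Prop :=
  ∀ x : ι → ℝ, (∑ i ∈ I, θ i - t) * weightedForm I θ A x ≤
    weightedSum I θ x ^ 2 - t * weightedNormSq I θ x

theorem HasFormBound.congr (h : HasFormBound I θ A t) (hAB : ∀ i ∈ I, ∀ j ∈ I, A i j = B i j) :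
    HasFormBound I θ B t := fun x ↦
  weightedForm_congr (x := x) hAB ▸ h x

theorem HasFormBound.anti (h : HasFormBound I θ A t) (hθ : ∀ i ∈ I, 0 ≤ θ i)
    (ht : t < ∑ i ∈ I, θ i) (htt' : t' ≤ t) : HasFormBound I θ A t' := fun x ↦ by
  have ht' : t' < ∑ i ∈ I, θ i := htt'.trans_lt ht
  have cauchy_schwarz := mul_le_mul_of_nonneg_left (sq_weightedSum_le (x := x) hθ)
    (sub_nonneg.2 htt')
  have scaled := mul_le_mul_of_nonneg_left (h x) (sub_pos.2 ht').le
  refine le_of_mul_le_mul_left ?_ (sub_pos.2 ht)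
  linarith

theorem HasFormBound.weightedForm_le (h : HasFormBound I θ A t) (ht : t < ∑ i ∈ I, θ i)
    (hx : weightedSum I θ x = 0) :
    weightedForm I θ A x ≤ -(t / (∑ i ∈ I, θ i - t)) * weightedNormSq I θ x := by
  have hx_bound := h x
  rw [hx, mul_comm, ← le_div_iff₀ (sub_pos.2 ht)] at hx_bound
  exact hx_bound.trans_eq (by ring)

theorem hasFormBound_singleton {a : ι} (ha : A a a = 1) (t : ℝ) : HasFormBound {a} θ A t :=
  fun x ↦ by
    simp only [weightedForm, weightedSum, weightedNormSq, sum_singleton, ha]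
    exact le_of_eq (by ring)

end FormBound

section Stationary

open Finset

variable {ι : Type*} {I : Finset ι} {θ : ι → ℝ} {A B : ι → ι → ℝ} {a : ι}

/-- The block of `A` on `I` has unit row sums and fixes the weight `θ` from the left. This is all of
stochasticity and reversibility that evaluating the form at a centred indicator takes; entries may
be negative. -/
structure HasStationaryWeight (I : Finset ι) (θ : ι → ℝ) (A : ι → ι → ℝ) : Prop where
  row_sum : ∀ i ∈ I, ∑ j ∈ I, A i j = 1
  stationary : ∀ j ∈ I, ∑ i ∈ I, θ i * A i j = θ j

theorem HasStationaryWeight.congr (h : HasStationaryWeight I θ A)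
    (hAB : ∀ i ∈ I, ∀ j ∈ I, A i j = B i j) :
    HasStationaryWeight I θ B where
  row_sum i hi := (sum_congr rfl fun j hj ↦ hAB i hi j hj) ▸ h.row_sum i hi
  stationary j hj := by
    rw [← h.stationary j hj]
    exact sum_congr rfl fun i hi ↦ by rw [hAB i hi j hj]

theorem hasStationaryWeight_singleton (ha : A a a = 1) : HasStationaryWeight {a} θ A := by
  constructor <;> simp [ha]

theorem hasStationaryWeight_of_reversible (hrow : ∀ i ∈ I, ∑ j ∈ I, A i j = 1)
    (hrev : ∀ i ∈ I, ∀ j ∈ I, θ i * A i j = θ j * A j i) : HasStationaryWeight I θ A where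
  row_sum := hrow
  stationary j hj := by
    rw [sum_congr rfl fun i hi ↦ hrev i hi j hj, ← mul_sum, hrow j hj, mul_one]

section CenteredIndicator

variable [DecidableEq ι]

/-- The projection of the indicator of the state `a` onto the `θ`-mean-zero vectors on `I`, scaled
by the total weight of `I`. -/
def centeredIndicator (I : Finset ι) (θ : ι → ℝ) (a : ι) : ι → ℝ :=
  fun i ↦ (Pi.single a (∑ l ∈ I, θ l) : ι → ℝ) i - θ a

theorem sum_mul_centeredIndicator (ha : a ∈ I) (f : ι → ℝ) :
    ∑ i ∈ I, f i * centeredIndicator I θ a i = (∑ i ∈ I, θ i) * f a - θ a * ∑ i ∈ I, f i := by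
  simp only [centeredIndicator, mul_sub, sum_sub_distrib, Pi.single_apply, mul_ite, mul_zero,
    sum_ite_eq', ha, if_true, ← sum_mul]
  ring

theorem weightedSum_centeredIndicator (ha : a ∈ I) :
    weightedSum I θ (centeredIndicator I θ a) = 0 := by
  simp only [weightedSum, mul_comm _ (θ _)]
  rw [sum_mul_centeredIndicator ha]
  ring

theorem weightedNormSq_centeredIndicator (ha : a ∈ I) :
    weightedNormSq I θ (centeredIndicator I θ a) =
      (∑ i ∈ I, θ i) * θ a * (∑ i ∈ I, θ i - θ a) := by
  have hmean := weightedSum_centeredIndicator (θ := θ) ha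
  simp only [weightedNormSq, weightedSum, mul_right_comm _ _ (θ _)] at hmean ⊢
  rw [sum_mul_centeredIndicator ha, hmean, centeredIndicator, Pi.single_eq_same]
  ring

theorem HasStationaryWeight.weightedForm_centeredIndicator (h : HasStationaryWeight I θ A)
    (ha : a ∈ I) :
    weightedForm I θ A (centeredIndicator I θ a) =
      (∑ i ∈ I, θ i) * θ a * ((∑ i ∈ I, θ i) * A a a - θ a) := by
  set y := centeredIndicator I θ a
  calc weightedForm I θ A y
      = ∑ i ∈ I, ((∑ l ∈ I, θ l) * (θ i * A i a * y i) - θ a * (y i * θ i)) := by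
        refine sum_congr rfl fun i hi ↦ ?_
        rw [sum_mul_centeredIndicator ha, h.row_sum i hi]
        ring
    _ = (∑ l ∈ I, θ l) * ∑ i ∈ I, θ i * A i a * y i - θ a * weightedSum I θ y := by
        rw [sum_sub_distrib, ← mul_sum, ← mul_sum, weightedSum]
    _ = (∑ i ∈ I, θ i) * θ a * ((∑ i ∈ I, θ i) * A a a - θ a) := by
        rw [sum_mul_centeredIndicator ha, h.stationary a ha, weightedSum_centeredIndicator ha]
        ring

end CenteredIndicator

theorem HasStationaryWeight.div_mem_rayleighQuotients (h : HasStationaryWeight I θ A) (ha : a ∈ I)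
    (hθa : 0 < θ a) (hlt : θ a < ∑ i ∈ I, θ i) :
    ((∑ i ∈ I, θ i) * A a a - θ a) / (∑ i ∈ I, θ i - θ a) ∈ rayleighQuotients I θ A := by
  classical
  refine ⟨centeredIndicator I θ a, ⟨a, ha, ?_⟩, weightedSum_centeredIndicator ha, ?_⟩
  · rw [centeredIndicator, Pi.single_eq_same]
    exact (sub_pos.2 hlt).ne'
  · rw [h.weightedForm_centeredIndicator ha, weightedNormSq_centeredIndicator ha,
      mul_div_mul_left _ _ (mul_pos (hθa.trans hlt) hθa).ne']

theorem HasStationaryWeight.le_sSup_rayleighQuotients (h : HasStationaryWeight I θ A)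
    (hθ : ∀ i ∈ I, 0 < θ i) (ha : a ∈ I) (hlt : θ a < ∑ i ∈ I, θ i) (hAa : 0 ≤ A a a) :
    -(θ a / (∑ i ∈ I, θ i - θ a)) ≤ sSup (rayleighQuotients I θ A) := by
  refine le_csSup_of_le (bddAbove_rayleighQuotients hθ A)
    (h.div_mem_rayleighQuotients ha (hθ a ha) hlt) ?_
  rw [← neg_div]
  have hsum_pos : 0 < ∑ i ∈ I, θ i := (hθ a ha).trans hlt
  exact div_le_div_of_nonneg_right (by linarith [mul_nonneg hsum_pos.le hAa]) (sub_pos.2 hlt).le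

theorem HasStationaryWeight.isGreatest_rayleighQuotients (h : HasStationaryWeight I θ A)
    (hbound : HasFormBound I θ A (θ a)) (hθ : ∀ i ∈ I, 0 < θ i) (ha : a ∈ I)
    (hlt : θ a < ∑ i ∈ I, θ i) (hAa : A a a = 0) :
    IsGreatest (rayleighQuotients I θ A) (-(θ a / (∑ i ∈ I, θ i - θ a))) := by
  constructor
  · simpa only [hAa, mul_zero, zero_sub, neg_div] using
      h.div_mem_rayleighQuotients ha (hθ a ha) hlt
  · rintro r ⟨x, hx, hx_mean, rfl⟩
    rw [div_le_iff₀ (weightedNormSq_pos hθ hx)]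
    exact hbound.weightedForm_le hlt hx_mean

end Stationary

section OnePointExtension

open Finset

variable {ι : Type*} {J : Finset ι} {θ : ι → ℝ} {a : ι} {A B : ι → ι → ℝ}

/-- One step of the recursion: the block of `A` on `J ∪ {a}` arises from the block of `B` on `J`
by adjoining the state `a`, which is left for `J` with law `θ` conditioned on `J`. -/
structure IsOnePointExtension (θ : ι → ℝ) (J : Finset ι) (a : ι) (A B : ι → ι → ℝ) : Prop where
  diag : A a a = 0
  row : ∀ j ∈ J, A a j = θ j / ∑ l ∈ J, θ l
  col : ∀ i ∈ J, A i a = θ a / ∑ l ∈ J, θ l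
  block : ∀ i ∈ J, ∀ j ∈ J, A i j = (1 - θ a / ∑ l ∈ J, θ l) * B i j

variable [DecidableEq ι]

theorem IsOnePointExtension.weightedForm_insert (h : IsOnePointExtension θ J a A B) (ha : a ∉ J)
    (hJ : ∑ l ∈ J, θ l ≠ 0) (x : ι → ℝ) :
    (∑ l ∈ J, θ l) * weightedForm (insert a J) θ A x =
      2 * θ a * x a * weightedSum J θ x +
        (∑ l ∈ J, θ l - θ a) * weightedForm J θ B x := by
  set s := ∑ l ∈ J, θ l
  have row_a : ∑ j ∈ insert a J, A a j * x j = weightedSum J θ x / s := by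
    rw [sum_insert ha, h.diag, zero_mul, zero_add, weightedSum, sum_div]
    exact sum_congr rfl fun j hj ↦ by rw [h.row j hj]; ring
  have row_J : ∀ i ∈ J, ∑ j ∈ insert a J, A i j * x j =
      θ a / s * x a + (1 - θ a / s) * ∑ j ∈ J, B i j * x j := fun i hi ↦ by
    rw [sum_insert ha, h.col i hi, mul_sum]
    exact congrArg _ (sum_congr rfl fun j hj ↦ by rw [h.block i hi j hj]; ring)
  have form_J : ∑ i ∈ J, (∑ j ∈ insert a J, A i j * x j) * x i * θ i =
      θ a / s * x a * weightedSum J θ x + (1 - θ a / s) * weightedForm J θ B x := by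
    rw [weightedSum, weightedForm, mul_sum, mul_sum, ← sum_add_distrib]
    exact sum_congr rfl fun i hi ↦ by rw [row_J i hi]; ring
  rw [weightedForm, sum_insert ha, row_a, form_J]
  field_simp
  ring

theorem IsOnePointExtension.hasFormBound (h : IsOnePointExtension θ J a A B) (ha : a ∉ J)
    (hJ : ∑ l ∈ J, θ l ≠ 0) (hB : HasFormBound J θ B (θ a)) :
    HasFormBound (insert a J) θ A (θ a) := fun x ↦ by
  rw [sum_insert ha, add_sub_cancel_left, h.weightedForm_insert ha hJ]
  calc 2 * θ a * x a * weightedSum J θ x + (∑ l ∈ J, θ l - θ a) * weightedForm J θ B x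
      ≤ 2 * θ a * x a * weightedSum J θ x +
          (weightedSum J θ x ^ 2 - θ a * weightedNormSq J θ x) := by gcongr; exact hB x
    _ = weightedSum (insert a J) θ x ^ 2 - θ a * weightedNormSq (insert a J) θ x := by
        simp only [weightedSum, weightedNormSq, sum_insert ha]
        ring

theorem IsOnePointExtension.hasStationaryWeight (h : IsOnePointExtension θ J a A B) (ha : a ∉ J)
    (hJ : ∑ l ∈ J, θ l ≠ 0) (hB : HasStationaryWeight J θ B) :
    HasStationaryWeight (insert a J) θ A := by
  have block_row : ∀ i ∈ J, ∑ j ∈ J, A i j = 1 - θ a / ∑ l ∈ J, θ l := fun i hi ↦ by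
    rw [sum_congr rfl (h.block i hi), ← mul_sum, hB.row_sum i hi, mul_one]
  have block_col : ∀ j ∈ J, ∑ i ∈ J, θ i * A i j = (1 - θ a / ∑ l ∈ J, θ l) * θ j := fun j hj ↦ by
    rw [← hB.stationary j hj, mul_sum]
    exact sum_congr rfl fun i hi ↦ by rw [h.block i hi j hj]; ring
  refine ⟨forall_mem_insert _ _ _ |>.2 ⟨?_, fun i hi ↦ ?_⟩,
    forall_mem_insert _ _ _ |>.2 ⟨?_, fun j hj ↦ ?_⟩⟩ <;> rw [sum_insert ha]
  · rw [h.diag, sum_congr rfl h.row, ← sum_div, div_self hJ, zero_add]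
  · rw [h.col i hi, block_row i hi, add_sub_cancel]
  · rw [h.diag, sum_congr rfl fun i hi ↦ by rw [h.col i hi], ← sum_mul, mul_zero, zero_add,
      mul_div_cancel₀ _ hJ]
  · rw [h.row j hj, block_col j hj]
    ring

end OnePointExtension

section Recursion

open Finset

variable {m n : ℕ} {θ : ℕ → ℝ}

section Family

variable {A : ℕ → ℕ → ℕ → ℝ}

theorem hasFormBound_of_recursion (hmn : m ≤ n) (hpos : ∀ i ∈ Icc m n, 0 < θ i)
    (hmono : ∀ k, m ≤ k → k < n → θ k ≤ θ (k + 1)) (htop : A n n n = 1)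
    (hA : ∀ k, m ≤ k → k < n → IsOnePointExtension θ (Icc (k + 1) n) k (A k) (A (k + 1))) :
    HasFormBound (Icc m n) θ (A m) (θ m) := by
  suffices ∀ t ≤ θ m, HasFormBound (Icc m n) θ (A m) t from this _ le_rfl
  refine Nat.decreasingInduction' (P := fun k ↦ ∀ t ≤ θ k, HasFormBound (Icc k n) θ (A k) t)
    (fun k hkn hmk ih t ht ↦ ?_) hmn fun t _ ↦ ?_
  · have hpos_k : ∀ i ∈ Icc k n, 0 < θ i := fun i hi ↦ hpos i (Icc_subset_Icc_left hmk hi)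
    have htail : 0 < ∑ l ∈ Icc (k + 1) n, θ l :=
      sum_pos (fun i hi ↦ hpos_k i (Icc_subset_Icc_left k.le_succ hi)) (nonempty_Icc.2 hkn)
    have hk : k ∉ Icc (k + 1) n := by simp
    have bound_k := (hA k hmk hkn).hasFormBound hk htail.ne' (ih _ (hmono k hmk hkn))
    have hlt : θ k < ∑ l ∈ insert k (Icc (k + 1) n), θ l := by
      rw [sum_insert hk]
      exact lt_add_of_pos_right _ htail
    rw [insert_Icc_add_one_left_eq_Icc hkn.le] at bound_k hlt
    exact bound_k.anti (fun i hi ↦ (hpos_k i hi).le) hlt ht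
  · rw [Icc_self]
    exact hasFormBound_singleton htop t

theorem hasStationaryWeight_of_recursion (hmn : m ≤ n) (hpos : ∀ i ∈ Icc m n, 0 < θ i)
    (htop : A n n n = 1)
    (hA : ∀ k, m ≤ k → k < n → IsOnePointExtension θ (Icc (k + 1) n) k (A k) (A (k + 1))) :
    HasStationaryWeight (Icc m n) θ (A m) := by
  refine Nat.decreasingInduction' (P := fun k ↦ HasStationaryWeight (Icc k n) θ (A k))
    (fun k hkn hmk ih ↦ ?_) hmn ?_
  · have htail : 0 < ∑ l ∈ Icc (k + 1) n, θ l :=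
      sum_pos (fun i hi ↦ hpos i (Icc_subset_Icc_left (hmk.trans k.le_succ) hi))
        (nonempty_Icc.2 hkn)
    rw [← insert_Icc_add_one_left_eq_Icc hkn.le]
    exact (hA k hmk hkn).hasStationaryWeight (by simp) htail.ne' ih
  · rw [Icc_self]
    exact hasStationaryWeight_singleton htop

end Family

/-- The family `P` with the entry `(n, n)` of each `P k` changed so that row `n` sums to `1` over
`{k, …, n}`. Unlike `P`, whose last member is `0`, it is a family of matrices with unit row sums,
and it satisfies the same recursion. -/
def lastRowCompletion (n : ℕ) (P : ℕ → ℕ → ℕ → ℝ) (k i j : ℕ) : ℝ :=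
  if i = n ∧ j = n then 1 - ∑ l ∈ Ico k n, P k n l else P k i j

theorem lastRowCompletion_top (P : ℕ → ℕ → ℕ → ℝ) : lastRowCompletion n P n n n = 1 := by
  simp [lastRowCompletion]

theorem lastRowCompletion_of_not {P : ℕ → ℕ → ℕ → ℝ} {k i j : ℕ} (h : ¬(i = n ∧ j = n)) :
    lastRowCompletion n P k i j = P k i j :=
  if_neg h

theorem isOnePointExtension_lastRowCompletion {P : ℕ → ℕ → ℕ → ℝ} {k : ℕ} (hk : k < n)
    (h : IsOnePointExtension θ (Icc (k + 1) n) k (P k) (P (k + 1))) :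
    IsOnePointExtension θ (Icc (k + 1) n) k (lastRowCompletion n P k)
      (lastRowCompletion n P (k + 1)) where
  diag := by rw [lastRowCompletion_of_not (by lia), h.diag]
  row j hj := by rw [lastRowCompletion_of_not (by lia), h.row j hj]
  col i hi := by rw [lastRowCompletion_of_not (by lia), h.col i hi]
  block i hi j hj := by
    by_cases hij : i = n ∧ j = n
    · have hn : n ∈ Icc (k + 1) n := right_mem_Icc.2 hk
      have tail : ∑ l ∈ Ico (k + 1) n, P k n l =
          (1 - θ k / ∑ l ∈ Icc (k + 1) n, θ l) * ∑ l ∈ Ico (k + 1) n, P (k + 1) n l := by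
        rw [mul_sum]
        exact sum_congr rfl fun l hl ↦ h.block n hn l (Ico_subset_Icc_self hl)
      simp only [lastRowCompletion, if_pos hij]
      rw [sum_eq_sum_Ico_succ_bot hk, h.col n hn, tail]
      ring
    · rw [lastRowCompletion_of_not hij, lastRowCompletion_of_not hij, h.block i hi j hj]

end Recursion

theorem recursive_construction_minimizes_second_eigenvalue_general
    (n : ℕ) (hn : 2 ≤ n) (θ : ℕ → ℝ)
    (hpos : ∀ i, 1 ≤ i → i ≤ n → 0 < θ i)
    (hmono : ∀ i j, 1 ≤ i → i ≤ j → j ≤ n → θ i ≤ θ j)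
    (s : ℕ → ℝ) (hs : ∀ k, s k = ∑ l ∈ Finset.Icc k n, θ l)
    (Pk : ℕ → ℕ → ℕ → ℝ)
    (hPdiag : ∀ k, 1 ≤ k → k < n → Pk k k k = 0)
    (hProw : ∀ k j, 1 ≤ k → k < j → j ≤ n → Pk k k j = θ j / s (k + 1))
    (hPcol : ∀ k j, 1 ≤ k → k < j → j ≤ n → Pk k j k = θ k / s (k + 1))
    (hPrec : ∀ k i j, 1 ≤ k → k < i → i ≤ n → k < j → j ≤ n →
      Pk k i j = (1 - θ k / s (k + 1)) * Pk (k + 1) i j)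
    (PA : ℕ → ℕ → ℝ)
    (hPA : ∀ i j, 1 ≤ i → i ≤ n → 1 ≤ j → j ≤ n → ¬(i = n ∧ j = n) → PA i j = Pk 1 i j)
    (hPAnn : PA n n = 1 - ∑ j ∈ Finset.Icc 1 (n - 1), Pk 1 n j) :
    (∀ x : ℕ → ℝ, weightedSum (Finset.Icc 1 n) θ x = 0 →
      weightedForm (Finset.Icc 1 n) θ PA x ≤
        -(θ 1 / (s 1 - θ 1)) * weightedNormSq (Finset.Icc 1 n) θ x) ∧
    sSup (rayleighQuotients (Finset.Icc 1 n) θ PA) = -(θ 1 / (s 1 - θ 1)) ∧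
    (∀ Q : ℕ → ℕ → ℝ, HasStationaryWeight (Finset.Icc 1 n) θ Q → 0 ≤ Q 1 1 →
      -(θ 1 / (s 1 - θ 1)) ≤ sSup (rayleighQuotients (Finset.Icc 1 n) θ Q)) := by
  simp only [hs] at hProw hPcol hPrec ⊢
  have hθ : ∀ i ∈ Finset.Icc 1 n, 0 < θ i := fun i hi ↦ by
    rw [Finset.mem_Icc] at hi; exact hpos i hi.1 hi.2
  have h1 : 1 ∈ Finset.Icc 1 n := Finset.left_mem_Icc.2 (by lia)
  have hlt : θ 1 < ∑ i ∈ Finset.Icc 1 n, θ i :=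
    Finset.single_lt_sum (j := 2) (by lia) h1 (by simp [hn]) (hpos 2 (by lia) hn)
      fun i hi _ ↦ (hθ i hi).le
  have hcompl : ∀ i ∈ Finset.Icc 1 n, ∀ j ∈ Finset.Icc 1 n,
      lastRowCompletion n Pk 1 i j = PA i j := fun i hi j hj ↦ by
    rw [Finset.mem_Icc] at hi hj
    by_cases hij : i = n ∧ j = n
    · rw [lastRowCompletion, if_pos hij, hij.1, hij.2, hPAnn,
        Finset.Icc_sub_one_right_eq_Ico_of_not_isMin (not_isMin_of_lt hn)]
    · rw [lastRowCompletion_of_not hij, hPA i j hi.1 hi.2 hj.1 hj.2 hij]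
  have hext : ∀ k, 1 ≤ k → k < n → IsOnePointExtension θ (Finset.Icc (k + 1) n) k
      (lastRowCompletion n Pk k) (lastRowCompletion n Pk (k + 1)) := fun k hk hkn ↦
    isOnePointExtension_lastRowCompletion hkn
      { diag := hPdiag k hk hkn
        row := fun j hj ↦ hProw k j hk (Finset.mem_Icc.1 hj).1 (Finset.mem_Icc.1 hj).2
        col := fun i hi ↦ hPcol k i hk (Finset.mem_Icc.1 hi).1 (Finset.mem_Icc.1 hi).2
        block := fun i hi j hj ↦ hPrec k i j hk (Finset.mem_Icc.1 hi).1 (Finset.mem_Icc.1 hi).2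
          (Finset.mem_Icc.1 hj).1 (Finset.mem_Icc.1 hj).2 }
  have hbound : HasFormBound (Finset.Icc 1 n) θ PA (θ 1) :=
    (hasFormBound_of_recursion (by lia) hθ (fun k hk hkn ↦ hmono k _ hk k.le_succ hkn)
      (lastRowCompletion_top Pk) hext).congr hcompl
  have hstat : HasStationaryWeight (Finset.Icc 1 n) θ PA :=
    (hasStationaryWeight_of_recursion (by lia) hθ (lastRowCompletion_top Pk) hext).congr hcompl
  have hPA11 : PA 1 1 = 0 := by
    rw [hPA 1 1 le_rfl (by lia) le_rfl (by lia) (by lia), hPdiag 1 le_rfl (by lia)]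
  exact ⟨fun x hx ↦ hbound.weightedForm_le hlt hx,
    (hstat.isGreatest_rayleighQuotients hbound hθ h1 hlt hPA11).csSup_eq,
    fun Q hQ hQ11 ↦ hQ.le_sSup_rayleighQuotients hθ h1 hlt hQ11⟩

/-- **The recursive construction minimizes the second largest eigenvalue.**
With the recursive construction of `PA` from the probability vector `θ` (states
`1, …, n`, `n ≥ 2`, `s k = ∑_{l=k}^n θ l`), we have: the quadratic form bound
`⟨PA x, x⟩_θ ≤ −(θ₁/(1−θ₁)) ⟨x, x⟩_θ` for every `x` with `⟨x, 𝟙⟩_θ = 0`; the second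
largest eigenvalue of `PA` (the supremum of the Rayleigh quotient over nonzero
`θ`-mean-zero vectors) equals `−θ₁/(1−θ₁)`; and this value is minimal among the
second largest eigenvalues of all row-stochastic matrices reversible w.r.t. `θ`. -/
theorem recursive_construction_minimizes_second_eigenvalue
    (n : ℕ) (hn : 2 ≤ n) (θ : ℕ → ℝ)
    (hpos : ∀ i, 1 ≤ i → i ≤ n → 0 < θ i)
    (hmono : ∀ i j, 1 ≤ i → i ≤ j → j ≤ n → θ i ≤ θ j)
    (hsum : ∑ i ∈ Finset.Icc 1 n, θ i = 1)
    (s : ℕ → ℝ) (hs : ∀ k, s k = ∑ l ∈ Finset.Icc k n, θ l)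
    (Pk : ℕ → ℕ → ℕ → ℝ)
    (hPtop : Pk n n n = 0)
    (hPdiag : ∀ k, 1 ≤ k → k < n → Pk k k k = 0)
    (hProw : ∀ k j, 1 ≤ k → k < j → j ≤ n → Pk k k j = θ j / s (k + 1))
    (hPcol : ∀ k j, 1 ≤ k → k < j → j ≤ n → Pk k j k = θ k / s (k + 1))
    (hPrec : ∀ k i j, 1 ≤ k → k < i → i ≤ n → k < j → j ≤ n →
      Pk k i j = (1 - θ k / s (k + 1)) * Pk (k + 1) i j)
    (PA : ℕ → ℕ → ℝ)
    (hPA : ∀ i j, 1 ≤ i → i ≤ n → 1 ≤ j → j ≤ n → ¬(i = n ∧ j = n) → PA i j = Pk 1 i j)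
    (hPAnn : PA n n = 1 - ∑ j ∈ Finset.Icc 1 (n - 1), Pk 1 n j) :
    (∀ x : ℕ → ℝ, (∑ i ∈ Finset.Icc 1 n, x i * θ i) = 0 →
      ∑ i ∈ Finset.Icc 1 n, (∑ j ∈ Finset.Icc 1 n, PA i j * x j) * x i * θ i ≤
        -(θ 1 / (1 - θ 1)) * ∑ i ∈ Finset.Icc 1 n, x i * x i * θ i) ∧
    (sSup {r : ℝ | ∃ x : ℕ → ℝ, (∃ i, 1 ≤ i ∧ i ≤ n ∧ x i ≠ 0) ∧
        (∑ i ∈ Finset.Icc 1 n, x i * θ i) = 0 ∧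
        r = (∑ i ∈ Finset.Icc 1 n, (∑ j ∈ Finset.Icc 1 n, PA i j * x j) * x i * θ i) /
          (∑ i ∈ Finset.Icc 1 n, x i * x i * θ i)} = -(θ 1 / (1 - θ 1))) ∧
    (∀ Q : ℕ → ℕ → ℝ,
      (∀ i j, 1 ≤ i → i ≤ n → 1 ≤ j → j ≤ n → 0 ≤ Q i j) →
      (∀ i, 1 ≤ i → i ≤ n → ∑ j ∈ Finset.Icc 1 n, Q i j = 1) →
      (∀ i j, 1 ≤ i → i ≤ n → 1 ≤ j → j ≤ n → θ i * Q i j = θ j * Q j i) →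
      -(θ 1 / (1 - θ 1)) ≤
        sSup {r : ℝ | ∃ x : ℕ → ℝ, (∃ i, 1 ≤ i ∧ i ≤ n ∧ x i ≠ 0) ∧
          (∑ i ∈ Finset.Icc 1 n, x i * θ i) = 0 ∧
          r = (∑ i ∈ Finset.Icc 1 n, (∑ j ∈ Finset.Icc 1 n, Q i j * x j) * x i * θ i) /
            (∑ i ∈ Finset.Icc 1 n, x i * x i * θ i)}) := by
  obtain ⟨hform, hsup, hmin⟩ := recursive_construction_minimizes_second_eigenvalue_general
    n hn θ hpos hmono s hs Pk hPdiag hProw hPcol hPrec PA hPA hPAnn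
  simp only [rayleighQuotients, Finset.mem_Icc, and_assoc, (hs 1).trans hsum] at hform hsup hmin
  refine ⟨hform, hsup, fun Q hQ0 hQ1 hQr ↦ hmin Q
    (hasStationaryWeight_of_reversible (fun i hi ↦ ?_) fun i hi j hj ↦ ?_)
    (hQ0 1 1 le_rfl (by lia) le_rfl (by lia))⟩
  · exact hQ1 i (Finset.mem_Icc.1 hi).1 (Finset.mem_Icc.1 hi).2
  · rw [Finset.mem_Icc] at hi hj
    exact hQr i j hi.1 hi.2 hj.1 hj.2
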